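/- Fix n ≥ 3 and p prime. Consider a sequence (a_t)_{t ≥ -n+2} with a_t ∈ W_{n+t-1}(ℤ_(p)) for −n+2 ≤ t ≤ 0, i.e. a_{-n+2} ∈ W_1, a_{-n+3} ∈ W_2, …, a_{-1} ∈ W_{n-2}, and a_t ∈ W_{n-1} for all t ≥ 0, with a_t = 0 for all sufficiently large t. Suppose the relations p·a_s = R(a_{s+1}) for −n+2 ≤ s ≤ −1 and F(a_t) = R(a_{t+1}) for t ≥ 0 hold. Then p^{n-2} · Σ_t pr̄_last(a_t) = 0 in ℤ_(p), and hence Σ_t [pr̄_last(a_t)] = 0 in 𝔽_p. -/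

import Mathlib

instance Zp.isPrime (p : ℕ) [Fact p.Prime] : (Ideal.span {(p : ℤ)}).IsPrime := by
  rw [Ideal.span_singleton_prime (by exact_mod_cast (Fact.out : p.Prime).ne_zero)]
  exact Int.prime_iff_natAbs_prime.mpr (by simpa using (Fact.out : p.Prime))

/-- The localization `ℤ_(p)` of `ℤ` at the prime `p`. -/
abbrev Zp (p : ℕ) [Fact p.Prime] : Type := Localization.AtPrime (Ideal.span {(p : ℤ)})

/-- The Frobenius `F : W_{m+1}(ℤ_(p)) → W_m(ℤ_(p))` in coordinates with respect
to the basis `V^0(1), …`: `F(V^0(1)) = V^0(1)`, `F(V^i(1)) = p·V^{i-1}(1)`. -/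
def Wfrob (p : ℕ) [Fact p.Prime] (m : ℕ) (a : Fin (m + 1) → Zp p) : Fin m → Zp p :=
  fun j => if j.val = 0 then a 0 + (p : Zp p) * a j.succ else (p : Zp p) * a j.succ

/-- The restriction `R : W_{m+1}(ℤ_(p)) → W_m(ℤ_(p))`: kills `V^m(1)`. -/
def Wres (p : ℕ) [Fact p.Prime] (m : ℕ) (a : Fin (m + 1) → Zp p) : Fin m → Zp p :=
  fun j => a j.castSucc

/-- `pr̄_last : W_{m+1}(ℤ_(p)) → ℤ_(p)`, the coefficient of `V^m(1)`. -/
def WprBar (p : ℕ) [Fact p.Prime] (m : ℕ) (a : Fin (m + 1) → Zp p) : Zp p :=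
  a (Fin.last m)

/-
Let `w a = ∑ i, π ^ i * a i` be the top ghost component on `W_{m+1}`. It is preserved by `F`, and
dropping the last coordinate changes it by `π ^ m * pr̄_last a`. With `m = n - 2`, the relation
`F a_t = R a_{t+1}` thus says `w (R a_{t+1}) = w (R a_t) + π ^ m * pr̄_last a_t`, and
`π * a_s = R a_{s+1}` similarly gives `w (R a_0) = π ^ m * ∑ s < 0, pr̄_last a_s`. Telescoping up to
a vanishing `a_T` yields `0 = w (R a_T) = π ^ m * ∑ t, pr̄_last a_t`.
-/

section Ghost

variable {A : Type*} [Semiring A] (π : A) {m : ℕ}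

/-- The Frobenius `W_{m+1} → W_m` in the coordinates of the basis `V^i(1)`, over any semiring `A`
and with an arbitrary `π : A` in place of `p`. Restriction is `Fin.init` in these coordinates. -/
def wittFrob (a : Fin (m + 1) → A) : Fin m → A :=
  fun j => if j.val = 0 then a 0 + π * a j.succ else π * a j.succ

/-- The top ghost component of a Witt vector given by its coordinates in the basis `V^i(1)`;
on `W_{r+1}` it is the ghost component of index `r`, which sends `V^i(1)` to `π ^ i`. -/
def topGhost (a : Fin m → A) : A :=
  ∑ i : Fin m, π ^ (i : ℕ) * a i

theorem topGhost_eq_topGhost_init_add (a : Fin (m + 1) → A) :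
    topGhost π a = topGhost π (Fin.init a) + π ^ m * a (Fin.last m) :=
  Fin.sum_univ_castSucc _

theorem topGhost_wittFrob (a : Fin (m + 2) → A) :
    topGhost π (wittFrob π a) = topGhost π a := by
  simp [topGhost, wittFrob, Fin.sum_univ_succ, pow_succ, mul_assoc, add_assoc]

theorem topGhost_const_mul (a : Fin m → A) :
    topGhost π (fun j => π * a j) = π * topGhost π a := by
  simp only [topGhost, Finset.mul_sum, ← mul_assoc, ← pow_succ, ← pow_succ']

variable {π}

theorem topGhost_eq_pow_mul_sum_last {b : ∀ m : ℕ, Fin (m + 1) → A} {k : ℕ}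
    (hb : ∀ m < k, (fun j => π * b m j) = Fin.init (b (m + 1))) :
    topGhost π (b k) = π ^ k * ∑ m ∈ Finset.range (k + 1), b m (Fin.last m) := by
  induction k with
  | zero => simp [topGhost]
  | succ k ih =>
    rw [topGhost_eq_topGhost_init_add, ← hb k k.lt_succ_self, topGhost_const_mul,
      ih fun m hm => hb m (hm.trans k.lt_succ_self), Finset.sum_range_succ _ (k + 1), mul_add,
      ← mul_assoc, ← pow_succ']

theorem topGhost_init_eq_add_pow_mul_sum_last {c : ℕ → Fin (m + 2) → A}
    (hc : ∀ t, wittFrob π (c t) = Fin.init (c (t + 1))) (T : ℕ) :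
    topGhost π (Fin.init (c T)) =
      topGhost π (Fin.init (c 0)) + π ^ (m + 1) * ∑ t ∈ Finset.range T, c t (Fin.last (m + 1)) := by
  induction T with
  | zero => simp
  | succ T ih =>
    rw [← hc, topGhost_wittFrob, topGhost_eq_topGhost_init_add, ih, Finset.sum_range_succ,
      mul_add, add_assoc]

theorem pow_mul_sum_last_eq_zero {k : ℕ} {b : ∀ m : ℕ, Fin (m + 1) → A} {c : ℕ → Fin (k + 2) → A}
    (hb : ∀ m < k, (fun j => π * b m j) = Fin.init (b (m + 1)))
    (hbc : (fun j => π * b k j) = Fin.init (c 0))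
    (hc : ∀ t, wittFrob π (c t) = Fin.init (c (t + 1))) {T : ℕ} (hT : Fin.init (c T) = 0) :
    π ^ (k + 1) * ((∑ m ∈ Finset.range (k + 1), b m (Fin.last m)) +
      ∑ t ∈ Finset.range T, c t (Fin.last (k + 1))) = 0 := by
  have init_zero : topGhost π (Fin.init (c 0)) =
      π ^ (k + 1) * ∑ m ∈ Finset.range (k + 1), b m (Fin.last m) := by
    rw [← hbc, topGhost_const_mul, topGhost_eq_pow_mul_sum_last hb, ← mul_assoc, ← pow_succ']
  rw [mul_add, ← init_zero, ← topGhost_init_eq_add_pow_mul_sum_last hc, hT]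
  simp [topGhost]

end Ghost

theorem charZero_localization_atPrime {A : Type*} [CommRing A] [IsDomain A] [CharZero A]
    (P : Ideal A) [P.IsPrime] : CharZero (Localization.AtPrime P) :=
  charZero_of_injective_algebraMap
    (IsLocalization.injective (Localization.AtPrime P) P.primeCompl_le_nonZeroDivisors)

theorem isLeftRegular_natCast_zp (p : ℕ) [hp : Fact p.Prime] : IsLeftRegular (p : Zp p) :=
  have := charZero_localization_atPrime (Ideal.span {(p : ℤ)})
  (IsRegular.of_ne_zero (Nat.cast_ne_zero.mpr hp.out.ne_zero)).left

theorem stmt12_general {A : Type*} [Semiring A] (π : A) (k : ℕ)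
    (b : ∀ m : ℕ, Fin (m + 1) → A) (c : ℕ → Fin (k + 2) → A)
    (h1 : ∀ m < k, (fun j => π * b m j) = Fin.init (b (m + 1)))
    (h2 : (fun j => π * b k j) = Fin.init (c 0))
    (h3 : ∀ t, wittFrob π (c t) = Fin.init (c (t + 1))) (T : ℕ) (hT : Fin.init (c T) = 0) :
    π ^ (k + 1) * ((∑ m ∈ Finset.range (k + 1), b m (Fin.last m)) +
        ∑ t ∈ Finset.range T, c t (Fin.last (k + 1))) = 0 ∧
      (IsLeftRegular π → (∑ m ∈ Finset.range (k + 1), b m (Fin.last m)) +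
        ∑ t ∈ Finset.range T, c t (Fin.last (k + 1)) = 0) := by
  have hsum := pow_mul_sum_last_eq_zero h1 h2 h3 hT
  exact ⟨hsum, fun hπ => (hπ.pow (k + 1)).mul_left_eq_zero_iff.mp hsum⟩

/-- with `n = k + 3 ≥ 3`: given `a_{-n+2} ∈ W_1, …, a_{-1} ∈ W_{n-2}`
(here `b 0, …, b k`) and `a_t ∈ W_{n-1}` for `t ≥ 0` (here `c t`), eventually zero,
satisfying `p·a_s = R(a_{s+1})` for `s < 0` and `F(a_t) = R(a_{t+1})` for `t ≥ 0`,
we have `p^{n-2} · Σ_t pr̄_last(a_t) = 0` in `ℤ_(p)`; hence the sum of the mod `p`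
reductions vanishes, i.e. `Σ_t pr̄_last(a_t)` is divisible by `p` in `ℤ_(p)`. -/
theorem stmt12 (p : ℕ) [Fact p.Prime] (k : ℕ)
    (b : ∀ m : ℕ, Fin (m + 1) → Zp p)
    (c : ℕ → Fin (k + 2) → Zp p)
    (h1 : ∀ m < k, (fun j => (p : Zp p) * b m j) = Wres p (m + 1) (b (m + 1)))
    (h2 : (fun j => (p : Zp p) * b k j) = Wres p (k + 1) (c 0))
    (h3 : ∀ t : ℕ, Wfrob p (k + 1) (c t) = Wres p (k + 1) (c (t + 1)))
    (T : ℕ) (hT : ∀ t ≥ T, c t = 0) :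
    (p : Zp p) ^ (k + 1) *
        ((∑ m ∈ Finset.range (k + 1), WprBar p m (b m)) +
          ∑ t ∈ Finset.range T, WprBar p (k + 1) (c t)) = 0 ∧
    ∃ z : Zp p,
      ((∑ m ∈ Finset.range (k + 1), WprBar p m (b m)) +
          ∑ t ∈ Finset.range T, WprBar p (k + 1) (c t)) = (p : Zp p) * z := by
  have h := stmt12_general (p : Zp p) k b c h1 h2 h3 T (congrArg Fin.init (hT T le_rfl))
  exact ⟨h.1, 0, (h.2 (isLeftRegular_natCast_zp p)).trans (mul_zero _).symm⟩
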